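/- Assume (W + log P)₊ ∈ L¹(Λ^N; P d^N x) and V_P ≠ ∅. Then there exists U ∈ V_P (with m-sum structure U(x₁,…,x_N) = Σ_{1≤i₁<⋯<i_m≤N} u(x_{i₁},…,x_{i_m}) a.e. for a symmetric real-valued measurable generator u) such that F_P(V) ≤ F_P(U) for every V ∈ V_P. Furthermore, if U₀ and U₁ (with generators u₀ and u₁) are any two maximizers of F_P on V_P (or on V_{ρ^(m)}, if maximizers on V_{ρ^(m)} exist), then there is a real constant C with U₁ − U₀ = C a.e. on Λ^N and u₁ − u₀ = C / C(N,m) a.e. on Λ^m, where C(N,m) is the binomial coefficient N choose m. -/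

import Mathlib

open MeasureTheory Real Filter
open scoped ENNReal

noncomputable section

variable {Λ : Type*} [MeasurableSpace Λ]

/-- The product measure on `Λ^k` (the `k`-fold product of `μ`). -/
def pm (μ : Measure Λ) (k : ℕ) : Measure (Fin k → Λ) := Measure.pi fun _ => μ

/-- A function on `Λ^k` is symmetric if it is invariant under all permutations
of its variables. -/
def IsSymm' {Λ : Type*} (k : ℕ) (f : (Fin k → Λ) → ℝ) : Prop :=
  ∀ σ : Equiv.Perm (Fin k), ∀ x, f (x ∘ σ) = f x

/-- The `m`-sum `Σ_{1 ≤ i₁ < ⋯ < i_m ≤ N} v(x_{i₁},…,x_{i_m})`. -/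
def mSum {Λ : Type*} (N m : ℕ) (v : (Fin m → Λ) → ℝ) (x : Fin N → Λ) : ℝ :=
  ∑ s ∈ Finset.powersetCard m (Finset.univ : Finset (Fin N)),
    if h : s.card = m then v (fun i => x (s.orderEmbOfFin h i)) else 0

/-- `V` has `m`-sum structure with (symmetric, measurable, real-valued) generator `v`. -/
def HasSumStruct (μ : Measure Λ) (N m : ℕ) (V : (Fin N → Λ) → ℝ)
    (v : (Fin m → Λ) → ℝ) : Prop :=
  IsSymm' m v ∧ Measurable v ∧ V =ᵐ[pm μ N] mSum N m v

/-- The measure `P d^N x`. -/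
def Pmeas (μ : Measure Λ) (N : ℕ) (P : (Fin N → Λ) → ℝ) : Measure (Fin N → Λ) :=
  (pm μ N).withDensity fun x => ENNReal.ofReal (P x)

/-- The measure `e^{-W} d^N x`. -/
def Wmeas (μ : Measure Λ) (N : ℕ) (W : (Fin N → Λ) → ℝ) : Measure (Fin N → Λ) :=
  (pm μ N).withDensity fun x => ENNReal.ofReal (Real.exp (-(W x)))

/-- The partition function `Z(V) = ∫ e^{-V-W} d^N x`, as an extended nonnegative real. -/
def ZE (μ : Measure Λ) (N : ℕ) (W V : (Fin N → Λ) → ℝ) : ℝ≥0∞ :=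
  ∫⁻ x, ENNReal.ofReal (Real.exp (-(V x) - W x)) ∂(pm μ N)

/-- The partition function `Z(V)` as a real number. -/
def Zfun (μ : Measure Λ) (N : ℕ) (W V : (Fin N → Λ) → ℝ) : ℝ :=
  (ZE μ N W V).toReal

/-- The functional `F_P(V) = exp(-∫ V P d^N x) / Z(V)`. -/
def FP (μ : Measure Λ) (N : ℕ) (P W V : (Fin N → Λ) → ℝ) : ℝ :=
  Real.exp (-∫ x, V x ∂(Pmeas μ N P)) / Zfun μ N W V

/-- Membership in the set `V_P`. -/
def memVP (μ : Measure Λ) (N m : ℕ) (P W V : (Fin N → Λ) → ℝ) : Prop :=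
  Integrable V (Pmeas μ N P) ∧
  Integrable (fun x => Real.exp (-(V x))) (Wmeas μ N W) ∧
  ∃ v, HasSumStruct μ N m V v

/-- Gluing `(y, z) ∈ Λ^m × Λ^{N-m}` into a point of `Λ^N`. -/
def glue {Λ : Type*} {N m : ℕ} (h : m ≤ N) (y : Fin m → Λ) (z : Fin (N - m) → Λ) :
    Fin N → Λ :=
  fun i => Fin.append y z (Fin.cast (by omega) i)

/-- The `m`-particle reduction `ρ^{(m)}` of `P`. -/
def rho (μ : Measure Λ) (N m : ℕ) (h : m ≤ N) (P : (Fin N → Λ) → ℝ)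
    (y : Fin m → Λ) : ℝ :=
  ∫ z, P (glue h y z) ∂(pm μ (N - m))

/-- The measure `ρ^{(m)} d^m x`. -/
def rhomeas (μ : Measure Λ) (N m : ℕ) (h : m ≤ N) (P : (Fin N → Λ) → ℝ) :
    Measure (Fin m → Λ) :=
  (pm μ m).withDensity fun y => ENNReal.ofReal (rho μ N m h P y)

/-- Membership in the set `V_{ρ^{(m)}}`. -/
def memVrho (μ : Measure Λ) (N m : ℕ) (h : m ≤ N) (P W V : (Fin N → Λ) → ℝ) : Prop :=
  Integrable (fun x => Real.exp (-(V x))) (Wmeas μ N W) ∧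
  ∃ v, HasSumStruct μ N m V v ∧ Integrable v (rhomeas μ N m h P)

/-- The `m`-particle density `ρ_U^{(m)}` associated with the potential `U`. -/
def rhoU (μ : Measure Λ) (N m : ℕ) (h : m ≤ N) (W U : (Fin N → Λ) → ℝ)
    (y : Fin m → Λ) : ℝ :=
  (∫ z, Real.exp (-(W (glue h y z)) - U (glue h y z)) ∂(pm μ (N - m))) / Zfun μ N W U


lemma sum_powersetCard_succ_insert {ι E : Type*} [DecidableEq ι] [AddCommGroup E]
    (f : Finset ι → E) (m : ℕ) {a : ι} {S : Finset ι} (ha : a ∉ S) :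
    ∑ A ∈ (insert a S).powersetCard (m + 1), f A =
      ∑ A ∈ S.powersetCard (m + 1), f A + ∑ A ∈ S.powersetCard m, f (insert a A) := by
  rw [Finset.powersetCard_succ_insert ha, Finset.sum_union, Finset.sum_image]
  · intro A hA B hB hAB
    have hA' : a ∉ A := fun h => ha ((Finset.mem_powersetCard.1 hA).1 h)
    have hB' : a ∉ B := fun h => ha ((Finset.mem_powersetCard.1 hB).1 h)
    rw [← Finset.erase_insert hA', ← Finset.erase_insert hB', hAB]
  · rw [Finset.disjoint_left]
    intro A hA hA'
    obtain ⟨B, -, rfl⟩ := Finset.mem_image.1 hA'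
    exact ha ((Finset.mem_powersetCard.1 hA).1 (Finset.mem_insert_self a B))

/-- If `f A - f B ∈ K` whenever `A` and `B` differ by exchanging one element, then
`f A - f B ∈ K` for all `A`, `B` of the same size. -/
lemma sub_mem_of_exchange {ι E : Type*} [DecidableEq ι] [AddCommGroup E]
    [Module ℝ E] (K : Submodule ℝ E) (G : Finset ι) (f : Finset ι → E) (m : ℕ)
    (h : ∀ a ∈ G, ∀ b ∈ G, a ≠ b → ∀ A ⊆ (G.erase a).erase b, A.card = m →
      f (insert a A) - f (insert b A) ∈ K) :
    ∀ (k : ℕ) (A B : Finset ι), A ⊆ G → B ⊆ G → A.card = m + 1 → B.card = m + 1 →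
      (A \ B).card = k → f A - f B ∈ K := by
  intro k
  induction k with
  | zero =>
    intro A B _ _ hAc hBc hk
    have hAB : A ⊆ B := by simpa using hk
    rw [Finset.eq_of_subset_of_card_le hAB (by omega), sub_self]
    exact K.zero_mem
  | succ k ih =>
    intro A B hA hB hAc hBc hk
    have hk' : (B \ A).card = k + 1 := by
      rw [← hk]; exact Finset.card_sdiff_comm (by omega)
    obtain ⟨a, ha⟩ : (A \ B).Nonempty := Finset.card_pos.1 (by omega)
    obtain ⟨b, hb⟩ : (B \ A).Nonempty := Finset.card_pos.1 (by omega)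
    rw [Finset.mem_sdiff] at ha hb
    have hab : a ≠ b := fun h => hb.2 (h ▸ ha.1)
    have hcard : (A.erase a).card = m := by rw [Finset.card_erase_of_mem ha.1]; omega
    have hbA : b ∉ A.erase a := fun h => hb.2 (Finset.mem_of_mem_erase h)
    have h₁ := h a (hA ha.1) b (hB hb.1) hab (A.erase a) (by
      intro c hc
      have hc' := Finset.mem_erase.1 hc
      refine Finset.mem_erase.2 ⟨?_, Finset.mem_erase.2 ⟨hc'.1, hA hc'.2⟩⟩
      rintro rfl
      exact hb.2 hc'.2) hcard
    rw [Finset.insert_erase ha.1] at h₁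
    have h₂ := ih (insert b (A.erase a)) B
      (Finset.insert_subset (hB hb.1) ((Finset.erase_subset _ _).trans hA)) hB
      (by rw [Finset.card_insert_of_notMem hbA, hcard]) hBc (by
        rw [Finset.insert_sdiff_of_mem _ hb.1, Finset.erase_sdiff_comm,
          Finset.card_erase_of_mem (Finset.mem_sdiff.2 ha)]
        omega)
    simpa using K.add_mem h₁ h₂

/-- The sums of `f` over the `m`-subsets of `N`-sets determine `f` on `m`-sets, provided the
ground set has at least `N + m` elements. -/
lemma mem_of_sum_powersetCard_mem {ι E : Type*} [DecidableEq ι] [AddCommGroup E] [Module ℝ E]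
    (K : Submodule ℝ E) (m : ℕ) :
    ∀ (N : ℕ) (G : Finset ι) (f : Finset ι → E), m ≤ N → N + m ≤ G.card →
      (∀ S ⊆ G, S.card = N → ∑ A ∈ S.powersetCard m, f A ∈ K) →
      ∀ A ⊆ G, A.card = m → f A ∈ K := by
  induction m with
  | zero =>
    intro N G f _ hG h A _ hA
    obtain ⟨S, hS, hSc⟩ := Finset.exists_subset_card_eq (show N ≤ G.card by omega)
    have := h S hS hSc
    rw [Finset.card_eq_zero.1 hA]
    simpa using this
  | succ m ih =>
    intro N G f hmN hG h A hA hAc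
    obtain ⟨N, rfl⟩ : ∃ n, N = n + 1 := ⟨N - 1, by omega⟩
    have hex : ∀ a ∈ G, ∀ b ∈ G, a ≠ b → ∀ A ⊆ (G.erase a).erase b, A.card = m →
        f (insert a A) - f (insert b A) ∈ K := by
      intro a ha b hb hab
      refine ih N ((G.erase a).erase b) (fun A => f (insert a A) - f (insert b A)) (by omega) ?_ ?_
      · rw [Finset.card_erase_of_mem (Finset.mem_erase.2 ⟨hab.symm, hb⟩),
          Finset.card_erase_of_mem ha]
        omega
      · intro S hS hSc
        have haS : a ∉ S := fun h => by simpa using hS h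
        have hbS : b ∉ S := fun h => by simpa using hS h
        have hSG : S ⊆ G := hS.trans ((Finset.erase_subset _ _).trans (Finset.erase_subset _ _))
        have h₁ := h (insert a S) (Finset.insert_subset ha hSG)
          (by rw [Finset.card_insert_of_notMem haS, hSc])
        have h₂ := h (insert b S) (Finset.insert_subset hb hSG)
          (by rw [Finset.card_insert_of_notMem hbS, hSc])
        rw [sum_powersetCard_succ_insert f m haS] at h₁
        rw [sum_powersetCard_succ_insert f m hbS] at h₂
        rw [Finset.sum_sub_distrib]
        simpa using K.sub_mem h₁ h₂
    obtain ⟨S, hAS, hSG, hSc⟩ :=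
      Finset.exists_subsuperset_card_eq hA (show A.card ≤ N + 1 by omega) (by omega)
    have h₁ := h S hSG hSc
    have h₂ : ∑ B ∈ S.powersetCard (m + 1), (f A - f B) ∈ K := by
      refine K.sum_mem fun B hB => ?_
      rw [Finset.mem_powersetCard] at hB
      exact sub_mem_of_exchange K G f m hex _ A B hA (hB.1.trans hSG) hAc hB.2 rfl
    have h₃ := K.add_mem h₂ h₁
    rw [← Finset.sum_add_distrib] at h₃
    simp only [sub_add_cancel, Finset.sum_const, Finset.card_powersetCard, hSc] at h₃
    rw [← Nat.cast_smul_eq_nsmul ℝ] at h₃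
    have hne : ((N + 1).choose (m + 1) : ℝ) ≠ 0 := by
      exact_mod_cast (Nat.choose_pos hmN).ne'
    exact (K.smul_mem_iff hne).1 h₃

/-- The partition function of the potential `V` relative to the weight `e^{-Q} dp`. -/
def relZ {X : Type*} [MeasurableSpace X] (p : Measure X) (Q V : X → ℝ) : ℝ :=
  ∫ x, Real.exp (-V x - Q x) ∂p

/-- The functional `exp (-∫ V dp) / Z(V)` relative to the weight `e^{-Q} dp`. -/
def relF {X : Type*} [MeasurableSpace X] (p : Measure X) (Q V : X → ℝ) : ℝ :=
  Real.exp (-∫ x, V x ∂p) / relZ p Q V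

/-- A family of potentials with finite `relF` that is stable under midpoints and under adding
constants. -/
structure IsAdmissible {X : Type*} [MeasurableSpace X] (p : Measure X) (Q : X → ℝ)
    (D : Set (X → ℝ)) : Prop where
  integrable : ∀ V ∈ D, Integrable V p
  integrable_exp : ∀ V ∈ D, Integrable (fun x => Real.exp (-V x - Q x)) p
  add_const : ∀ V ∈ D, ∀ c : ℝ, (fun x => V x + c) ∈ D
  midpoint : ∀ V ∈ D, ∀ V' ∈ D, (fun x => (V x + V' x) / 2) ∈ D

section Abstract

variable {X : Type*} [MeasurableSpace X] {p : Measure X} {Q : X → ℝ}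

lemma relZ_add_const (V : X → ℝ) (c : ℝ) :
    relZ p Q (fun x => V x + c) = Real.exp (-c) * relZ p Q V := by
  simp only [relZ]
  rw [← integral_const_mul]
  congr with x
  rw [← Real.exp_add]
  congr 1
  ring

lemma integrable_of_integrable_pos_part {V : X → ℝ} (hQ : AEStronglyMeasurable Q p)
    (hQpos : Integrable (fun x => max (Q x) 0) p) (hV : Integrable V p)
    (hE : Integrable (fun x => Real.exp (-V x - Q x)) p) : Integrable Q p := by
  refine Integrable.mono' ((hQpos.const_mul 2).add (hV.add hE)) hQ (ae_of_all _ fun x => ?_)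
  have h := Real.add_one_le_exp (-V x - Q x)
  simp only [Pi.add_apply, Real.norm_eq_abs]
  rcases le_total 0 (Q x) with hx | hx
  · rw [max_eq_left hx, abs_of_nonneg hx]; linarith
  · rw [max_eq_right hx, abs_of_nonpos hx]; linarith

/-- Fatou's lemma for integrals of nonnegative real functions. -/
lemma integrable_and_integral_le_of_tendsto {f : ℕ → X → ℝ} {g : X → ℝ} {c : ℝ}
    (hf : ∀ n, Integrable (f n) p) (hf0 : ∀ n x, 0 ≤ f n x)
    (hg : ∀ᵐ x ∂p, Tendsto (fun n => f n x) atTop (nhds (g x)))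
    (hc : Tendsto (fun n => ∫ x, f n x ∂p) atTop (nhds c)) :
    Integrable g p ∧ ∫ x, g x ∂p ≤ c := by
  have hgm : AEStronglyMeasurable g p :=
    aestronglyMeasurable_of_tendsto_ae atTop (fun n => (hf n).1) hg
  have hg0 : 0 ≤ᵐ[p] g := by
    filter_upwards [hg] with x hx
    exact ge_of_tendsto' hx fun n => hf0 n x
  have hc0 : 0 ≤ c := ge_of_tendsto' hc fun n => integral_nonneg (hf0 n)
  have hle : ∫⁻ x, ENNReal.ofReal (g x) ∂p ≤ ENNReal.ofReal c := by
    calc ∫⁻ x, ENNReal.ofReal (g x) ∂p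
        = ∫⁻ x, liminf (fun n => ENNReal.ofReal (f n x)) atTop ∂p := by
          refine lintegral_congr_ae ?_
          filter_upwards [hg] with x hx
          exact ((ENNReal.continuous_ofReal.tendsto _).comp hx).liminf_eq.symm
      _ ≤ liminf (fun n => ∫⁻ x, ENNReal.ofReal (f n x) ∂p) atTop :=
          lintegral_liminf_le' fun n => (hf n).1.aemeasurable.ennreal_ofReal
      _ = ENNReal.ofReal c := by
          simp_rw [← ofReal_integral_eq_lintegral_ofReal (hf _) (ae_of_all _ (hf0 _))]
          exact ((ENNReal.continuous_ofReal.tendsto _).comp hc).liminf_eq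
  have hgi : Integrable g p :=
    ⟨hgm, (hasFiniteIntegral_iff_ofReal hg0).2 (hle.trans_lt ENNReal.ofReal_lt_top)⟩
  refine ⟨hgi, ?_⟩
  rw [← ofReal_integral_eq_lintegral_ofReal hgi hg0] at hle
  exact (ENNReal.ofReal_le_ofReal_iff hc0).1 hle

/-- If `∫ (hₙ + exp (-hₙ))` is bounded and `exp (-hₙ / 2)` converges a.e., then `hₙ` converges
a.e. to a finite limit. -/
lemma ae_exists_tendsto_of_tendsto_exp {h : ℕ → X → ℝ} {c : ℝ}
    (hi : ∀ n, Integrable (h n) p) (hE : ∀ n, Integrable (fun x => Real.exp (-h n x)) p)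
    (hc : Tendsto (fun n => ∫ x, (h n x + Real.exp (-h n x)) ∂p) atTop (nhds c))
    (hconv : ∀ᵐ x ∂p, ∃ l, Tendsto (fun n => Real.exp (-h n x / 2)) atTop (nhds l)) :
    ∀ᵐ x ∂p, ∃ l, Tendsto (fun n => h n x) atTop (nhds l) := by
  have h0 : ∀ n x, 0 ≤ h n x + Real.exp (-h n x) := fun n x => by
    linarith [Real.add_one_le_exp (-h n x)]
  have hint : ∀ n, Integrable (fun x => h n x + Real.exp (-h n x)) p := fun n => (hi n).add (hE n)
  have hmeas : ∀ n, AEMeasurable (fun x => ENNReal.ofReal (h n x + Real.exp (-h n x))) p :=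
    fun n => (hint n).1.aemeasurable.ennreal_ofReal
  have hfin : ∫⁻ x, liminf (fun n => ENNReal.ofReal (h n x + Real.exp (-h n x))) atTop ∂p ≠ ⊤ := by
    refine ((lintegral_liminf_le' hmeas).trans_lt ?_).ne
    simp_rw [← ofReal_integral_eq_lintegral_ofReal (hint _) (ae_of_all _ (h0 _))]
    exact ((ENNReal.continuous_ofReal.tendsto _).comp hc).liminf_eq.trans_lt ENNReal.ofReal_lt_top
  have hliminf : AEMeasurable
      (fun x => liminf (fun n => ENNReal.ofReal (h n x + Real.exp (-h n x))) atTop) p := by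
    refine ⟨_, Measurable.liminf fun n => (hmeas n).measurable_mk, ?_⟩
    filter_upwards [ae_all_iff.2 fun n => (hmeas n).ae_eq_mk] with x hx
    simp_rw [hx]
  filter_upwards [ae_lt_top' hliminf hfin, hconv] with x hx ⟨l, hl⟩
  have hl0 : 0 ≤ l := ge_of_tendsto' hl fun n => (Real.exp_pos _).le
  rcases hl0.eq_or_lt with rfl | hl0
  · exfalso
    have h₁ : Tendsto (fun n => -h n x / 2) atTop atBot := by
      rw [← Real.tendsto_exp_comp_nhds_zero]; exact hl
    have h₂ : Tendsto (fun n => h n x) atTop atTop := by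
      have := (tendsto_neg_atBot_atTop.comp h₁).atTop_mul_const (zero_lt_two' ℝ)
      refine this.congr fun n => ?_
      simp only [Function.comp_apply]
      ring
    have h₃ : Tendsto (fun n => ENNReal.ofReal (h n x + Real.exp (-h n x))) atTop (nhds ⊤) :=
      ENNReal.tendsto_ofReal_atTop.comp
        (tendsto_atTop_mono (fun n => le_add_of_nonneg_right (Real.exp_pos _).le) h₂)
    rw [h₃.liminf_eq] at hx
    exact lt_irrefl _ hx
  · refine ⟨-2 * Real.log l, ?_⟩
    refine ((hl.log hl0.ne').const_mul (-2)).congr fun n => ?_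
    rw [Real.log_exp]
    ring

variable [IsProbabilityMeasure p]

lemma relF_add_const {V : X → ℝ} (hV : Integrable V p) (c : ℝ) :
    relF p Q (fun x => V x + c) = relF p Q V := by
  simp only [relF]
  rw [relZ_add_const, integral_add hV (integrable_const c)]
  simp only [integral_const, probReal_univ, one_smul, neg_add, Real.exp_add]
  rw [mul_comm, mul_div_mul_left _ _ (Real.exp_pos _).ne']

lemma relZ_add_log {V : X → ℝ} (hV : Integrable (fun x => Real.exp (-V x - Q x)) p) :
    relZ p Q (fun x => V x + Real.log (relZ p Q V)) = 1 := by
  have h : 0 < relZ p Q V := integral_exp_pos hV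
  rw [relZ_add_const, Real.exp_neg, Real.exp_log h, inv_mul_cancel₀ h.ne']

/-- Nearly maximal normalized potentials are close: the Hellinger distance of the associated
densities is controlled by the defect. -/
lemma integral_sq_sub_le {V V' : X → ℝ} {M ε : ℝ} (hM : 0 < M) (hε : ε ≤ 1)
    (hV : Integrable V p) (hV' : Integrable V' p)
    (hE : Integrable (fun x => Real.exp (-V x - Q x)) p)
    (hE' : Integrable (fun x => Real.exp (-V' x - Q x)) p)
    (hmid : Integrable (fun x => Real.exp (-((V x + V' x) / 2) - Q x)) p)
    (hZ : relZ p Q V = 1) (hZ' : relZ p Q V' = 1)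
    (hF : M * (1 - ε) ≤ relF p Q V) (hF' : M * (1 - ε) ≤ relF p Q V')
    (hFmid : relF p Q (fun x => (V x + V' x) / 2) ≤ M) :
    Integrable (fun x => (Real.exp (-(V x + Q x) / 2) - Real.exp (-(V' x + Q x) / 2)) ^ 2) p ∧
      ∫ x, (Real.exp (-(V x + Q x) / 2) - Real.exp (-(V' x + Q x) / 2)) ^ 2 ∂p ≤ 2 * ε := by
  have hpt : (fun x => (Real.exp (-(V x + Q x) / 2) - Real.exp (-(V' x + Q x) / 2)) ^ 2) =
      fun x => Real.exp (-V x - Q x) + Real.exp (-V' x - Q x) -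
        2 * Real.exp (-((V x + V' x) / 2) - Q x) := by
    funext x
    have h₁ : Real.exp (-V x - Q x) = Real.exp (-(V x + Q x) / 2) ^ 2 := by
      rw [← Real.exp_nat_mul]; congr 1; push_cast; ring
    have h₂ : Real.exp (-V' x - Q x) = Real.exp (-(V' x + Q x) / 2) ^ 2 := by
      rw [← Real.exp_nat_mul]; congr 1; push_cast; ring
    have h₃ : Real.exp (-((V x + V' x) / 2) - Q x) =
        Real.exp (-(V x + Q x) / 2) * Real.exp (-(V' x + Q x) / 2) := by
      rw [← Real.exp_add]; congr 1; ring
    rw [h₁, h₂, h₃]; ring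
  have hZmid : 0 < relZ p Q (fun x => (V x + V' x) / 2) := integral_exp_pos hmid
  have hint : ∫ x, (V x + V' x) / 2 ∂p = (∫ x, V x ∂p) / 2 + (∫ x, V' x ∂p) / 2 := by
    rw [integral_div, integral_add hV hV', add_div]
  rw [hpt]
  refine ⟨(hE.add hE').sub (hmid.const_mul 2), ?_⟩
  have hsum : Integrable (fun x => Real.exp (-V x - Q x) + Real.exp (-V' x - Q x)) p := hE.add hE'
  rw [integral_sub hsum (hmid.const_mul 2), integral_add hE hE', integral_const_mul]
  change relZ p Q V + relZ p Q V' - 2 * relZ p Q (fun x => (V x + V' x) / 2) ≤ 2 * ε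
  rw [relF, hZ, div_one] at hF
  rw [relF, hZ', div_one] at hF'
  rw [relF, div_le_iff₀ hZmid, hint, neg_add, Real.exp_add] at hFmid
  have e₁ : Real.exp (-∫ x, V x ∂p) = Real.exp (-((∫ x, V x ∂p) / 2)) ^ 2 := by
    rw [← Real.exp_nat_mul]; congr 1; push_cast; ring
  have e₂ : Real.exp (-∫ x, V' x ∂p) = Real.exp (-((∫ x, V' x ∂p) / 2)) ^ 2 := by
    rw [← Real.exp_nat_mul]; congr 1; push_cast; ring
  rw [e₁] at hF
  rw [e₂] at hF'
  have hs : M * (1 - ε) ≤ Real.exp (-((∫ x, V x ∂p) / 2)) * Real.exp (-((∫ x, V' x ∂p) / 2)) := by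
    have h0 : 0 ≤ M * (1 - ε) := mul_nonneg hM.le (by linarith)
    refine abs_le_of_sq_le_sq' ?_ (by positivity) |>.2
    rw [mul_pow (Real.exp _), pow_two (M * (1 - ε))]
    exact mul_le_mul hF hF' h0 (by positivity)
  have : 1 - ε ≤ relZ p Q (fun x => (V x + V' x) / 2) :=
    le_of_mul_le_mul_left (hs.trans hFmid) hM
  linarith

lemma ae_sub_eq_const_of_isMax {D : Set (X → ℝ)} (hD : IsAdmissible p Q D) {V V' : X → ℝ}
    (hV : V ∈ D) (hV' : V' ∈ D) (hmax : ∀ U ∈ D, relF p Q U ≤ relF p Q V)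
    (hmax' : ∀ U ∈ D, relF p Q U ≤ relF p Q V') :
    ∃ C : ℝ, ∀ᵐ x ∂p, V' x - V x = C := by
  have hZ := relZ_add_log (hD.integrable_exp V hV)
  have hZ' := relZ_add_log (hD.integrable_exp V' hV')
  set c := Real.log (relZ p Q V)
  set c' := Real.log (relZ p Q V')
  have hc := hD.add_const V hV c
  have hc' := hD.add_const V' hV' c'
  have hF : relF p Q (fun x => V x + c) = relF p Q V := relF_add_const (hD.integrable V hV) c
  have hF' : relF p Q (fun x => V' x + c') = relF p Q V := by
    rw [relF_add_const (hD.integrable V' hV') c']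
    exact le_antisymm (hmax _ hV') (hmax' _ hV)
  have hM : 0 < relF p Q V :=
    div_pos (Real.exp_pos _) (integral_exp_pos (hD.integrable_exp V hV))
  obtain ⟨hi, hle⟩ := integral_sq_sub_le (M := relF p Q V) (ε := 0) hM zero_le_one
    (hD.integrable _ hc) (hD.integrable _ hc') (hD.integrable_exp _ hc)
    (hD.integrable_exp _ hc') (hD.integrable_exp _ (hD.midpoint _ hc _ hc')) hZ hZ'
    (by rw [hF]; simp) (by rw [hF']; simp) (hmax _ (hD.midpoint _ hc _ hc'))
  have h0 := (integral_eq_zero_iff_of_nonneg (fun x => sq_nonneg _) hi).1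
    (le_antisymm (by simpa using hle) (integral_nonneg fun x => sq_nonneg _))
  refine ⟨c - c', ?_⟩
  filter_upwards [h0] with x hx
  have := Real.exp_injective (sub_eq_zero.1 (pow_eq_zero_iff two_ne_zero |>.1 hx))
  linarith

lemma relF_le_exp_integral {V : X → ℝ} (hQ : Integrable Q p) (hV : Integrable V p)
    (hE : Integrable (fun x => Real.exp (-V x - Q x)) p) :
    relF p Q V ≤ Real.exp (∫ x, Q x ∂p) := by
  have hZ : 0 < relZ p Q V := integral_exp_pos hE
  have hVQ : Integrable (fun x => V x + Q x) p := hV.add hQ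
  have h1VQ : Integrable (fun x => 1 - (V x + Q x)) p := (integrable_const 1).sub hVQ
  have h : ∫ x, (1 - (V x + Q x) - Real.log (relZ p Q V)) ∂p ≤
      ∫ x, Real.exp (-Real.log (relZ p Q V)) * Real.exp (-V x - Q x) ∂p := by
    refine integral_mono ?_ (hE.const_mul _) fun x => ?_
    · exact h1VQ.sub (integrable_const _)
    · have := Real.add_one_le_exp (-Real.log (relZ p Q V) + (-V x - Q x))
      rw [Real.exp_add] at this
      dsimp only
      linarith
  rw [integral_const_mul, Real.exp_neg, Real.exp_log hZ] at h
  change _ ≤ (relZ p Q V)⁻¹ * relZ p Q V at h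
  rw [inv_mul_cancel₀ hZ.ne', integral_sub h1VQ (integrable_const _),
    integral_sub (integrable_const 1) hVQ, integral_add hV hQ] at h
  simp only [integral_const, probReal_univ, one_smul] at h
  rw [relF, div_le_iff₀ hZ]
  nth_rw 1 [← Real.exp_log hZ]
  rw [← Real.exp_add]
  exact Real.exp_le_exp.2 (by linarith)

/-- A maximizing sequence of `relF` can be chosen to converge a.e. to a potential at which
`relF` is at least its supremum. -/
lemma exists_tendsto_ae_relF_le {D : Set (X → ℝ)} (hD : IsAdmissible p Q D) (hne : D.Nonempty)
    (hQ : AEStronglyMeasurable Q p) (hQpos : Integrable (fun x => max (Q x) 0) p) :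
    ∃ (V : ℕ → X → ℝ) (U : X → ℝ), (∀ n, V n ∈ D) ∧ Integrable U p ∧
      Integrable (fun x => Real.exp (-U x - Q x)) p ∧
      (∀ᵐ x ∂p, Tendsto (fun n => V n x) atTop (nhds (U x))) ∧
      ∀ V ∈ D, relF p Q V ≤ relF p Q U := by
  obtain ⟨V₀, hV₀⟩ := hne
  have hQi : Integrable Q p :=
    integrable_of_integrable_pos_part hQ hQpos (hD.integrable _ hV₀) (hD.integrable_exp _ hV₀)
  have hbdd : BddAbove (relF p Q '' D) := by
    refine ⟨Real.exp (∫ x, Q x ∂p), ?_⟩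
    rintro _ ⟨V, hV, rfl⟩
    exact relF_le_exp_integral hQi (hD.integrable _ hV) (hD.integrable_exp _ hV)
  set M := sSup (relF p Q '' D)
  have hle : ∀ V ∈ D, relF p Q V ≤ M := fun V hV => le_csSup hbdd ⟨V, hV, rfl⟩
  have hM : 0 < M := lt_of_lt_of_le
    (div_pos (Real.exp_pos _) (integral_exp_pos (hD.integrable_exp V₀ hV₀))) (hle V₀ hV₀)
  set δ : ℕ → ℝ := fun n => (1 / 2) ^ n with hδdef
  have hδ0 : ∀ n, 0 < δ n := fun n => by positivity
  have hδ1 : ∀ n, δ n ≤ 1 := fun n => pow_le_one₀ (by norm_num) (by norm_num)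
  have hδanti : Antitone δ := fun a b hab => pow_le_pow_of_le_one (by norm_num) (by norm_num) hab
  have hδlim : Tendsto δ atTop (nhds 0) :=
    tendsto_pow_atTop_nhds_zero_of_lt_one (by norm_num) (by norm_num)
  have hex : ∀ n, ∃ V ∈ D, relZ p Q V = 1 ∧ M * (1 - δ n ^ 2 / 4) ≤ relF p Q V := by
    intro n
    have hlt : M * (1 - δ n ^ 2 / 4) < M := by nlinarith [mul_pos hM (pow_pos (hδ0 n) 2)]
    obtain ⟨_, ⟨V, hV, rfl⟩, hVlt⟩ := exists_lt_of_lt_csSup (Set.Nonempty.image _ ⟨V₀, hV₀⟩) hlt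
    refine ⟨_, hD.add_const V hV _, relZ_add_log (hD.integrable_exp V hV), ?_⟩
    rw [relF_add_const (hD.integrable V hV)]
    exact hVlt.le
  choose V hVD hVZ hVF using hex
  have hVi : ∀ n, Integrable (V n) p := fun n => hD.integrable _ (hVD n)
  have hVE : ∀ n, Integrable (fun x => Real.exp (-V n x - Q x)) p :=
    fun n => hD.integrable_exp _ (hVD n)
  have hconv : ∀ᵐ x ∂p, ∃ l, Tendsto (fun n => Real.exp (-(V n x + Q x) / 2)) atTop (nhds l) := by
    have hm : ∀ n, AEStronglyMeasurable (fun x => Real.exp (-(V n x + Q x) / 2)) p := fun n =>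
      Real.continuous_exp.comp_aestronglyMeasurable
        (((hVi n).1.add hQ).neg.mul (aestronglyMeasurable_const (b := (2 : ℝ)⁻¹)))
    refine Lp.ae_tendsto_of_cauchy_eLpNorm hm le_rfl (B := fun n => ENNReal.ofReal (δ n)) ?_ ?_
    · rw [← ENNReal.ofReal_tsum_of_nonneg (fun n => (hδ0 n).le)
        (summable_geometric_of_lt_one (by norm_num) (by norm_num))]
      exact ENNReal.ofReal_ne_top
    · intro k n n' hn hn'
      have hmono : ∀ j, k ≤ j → M * (1 - δ k ^ 2 / 4) ≤ relF p Q (V j) := fun j hj => by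
        refine le_trans (mul_le_mul_of_nonneg_left ?_ hM.le) (hVF j)
        have := pow_le_pow_left₀ (hδ0 j).le (hδanti hj) 2
        linarith
      obtain ⟨hsi, hsle⟩ := integral_sq_sub_le hM
        (by nlinarith [hδ0 k, hδ1 k] : δ k ^ 2 / 4 ≤ 1) (hVi n) (hVi n') (hVE n) (hVE n')
        (hD.integrable_exp _ (hD.midpoint _ (hVD n) _ (hVD n'))) (hVZ n) (hVZ n')
        (hmono n hn) (hmono n' hn') (hle _ (hD.midpoint _ (hVD n) _ (hVD n')))
      rw [eLpNorm_one_eq_lintegral_enorm]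
      set φ := fun x => Real.exp (-(V n x + Q x) / 2) - Real.exp (-(V n' x + Q x) / 2)
      calc ∫⁻ x, ‖φ x‖ₑ ∂p
          ≤ ∫⁻ x, ENNReal.ofReal ((δ k)⁻¹ / 2 * φ x ^ 2 + δ k / 2) ∂p := by
            refine lintegral_mono fun x => ?_
            rw [Real.enorm_eq_ofReal_abs]
            refine ENNReal.ofReal_le_ofReal ?_
            have h : 0 ≤ (δ k)⁻¹ / 2 * (|φ x| - δ k) ^ 2 :=
              mul_nonneg (by have := hδ0 k; positivity) (sq_nonneg _)
            have h' : (δ k)⁻¹ / 2 * (|φ x| - δ k) ^ 2 =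
                (δ k)⁻¹ / 2 * φ x ^ 2 + δ k / 2 - |φ x| := by
              rw [← sq_abs (φ x)]
              have := (hδ0 k).ne'
              field_simp
              ring
            linarith
        _ = ENNReal.ofReal (∫ x, ((δ k)⁻¹ / 2 * φ x ^ 2 + δ k / 2) ∂p) := by
            refine (ofReal_integral_eq_lintegral_ofReal
              ((hsi.const_mul _).add (integrable_const _)) (ae_of_all _ fun x => ?_)).symm
            change 0 ≤ (δ k)⁻¹ / 2 * φ x ^ 2 + δ k / 2
            have := hδ0 k
            positivity
        _ < ENNReal.ofReal (δ k) := by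
            rw [ENNReal.ofReal_lt_ofReal_iff (hδ0 k),
              integral_add (hsi.const_mul _) (integrable_const _), integral_const_mul]
            simp only [integral_const, probReal_univ, one_smul]
            have h1 : (δ k)⁻¹ / 2 * ∫ x, φ x ^ 2 ∂p ≤ (δ k)⁻¹ / 2 * (2 * (δ k ^ 2 / 4)) :=
              mul_le_mul_of_nonneg_left hsle (by have := hδ0 k; positivity)
            have h2 : (δ k)⁻¹ / 2 * (2 * (δ k ^ 2 / 4)) = δ k / 4 := by
              have := (hδ0 k).ne'
              field_simp
            have := hδ0 k
            linarith
  have hexp : ∀ n, (fun x => Real.exp (-(V n x + Q x))) = fun x => Real.exp (-V n x - Q x) :=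
    fun n => by funext x; congr 1; ring
  have hFlim : Tendsto (fun n => relF p Q (V n)) atTop (nhds M) := by
    refine tendsto_of_tendsto_of_tendsto_of_le_of_le (g := fun n => M * (1 - δ n ^ 2 / 4)) ?_
      tendsto_const_nhds hVF fun n => hle _ (hVD n)
    simpa using (((hδlim.pow 2).div_const 4).const_sub 1).const_mul M
  have hVlim : Tendsto (fun n => ∫ x, V n x ∂p) atTop (nhds (-Real.log M)) := by
    refine ((hFlim.log hM.ne').neg).congr fun n => ?_
    rw [relF, hVZ, div_one, Real.log_exp, neg_neg]
  have hhi : ∀ n, Integrable (fun x => V n x + Q x) p := fun n => (hVi n).add hQi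
  have hhE : ∀ n, Integrable (fun x => Real.exp (-(V n x + Q x))) p := fun n => by
    rw [hexp n]; exact hVE n
  have hZ1 : ∀ n, ∫ x, Real.exp (-(V n x + Q x)) ∂p = 1 := fun n => by
    rw [hexp n]; exact hVZ n
  have hGlim : Tendsto (fun n => ∫ x, (V n x + Q x + Real.exp (-(V n x + Q x))) ∂p) atTop
      (nhds (-Real.log M + ∫ x, Q x ∂p + 1)) := by
    refine ((hVlim.add_const _).add_const 1).congr fun n => ?_
    rw [integral_add (hhi n) (hhE n), integral_add (hVi n) hQi, hZ1]
  have hlim := ae_exists_tendsto_of_tendsto_exp hhi hhE hGlim hconv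
  obtain ⟨h, -, hh⟩ := measurable_limit_of_tendsto_metrizable_ae
    (fun n => (hhi n).1.aemeasurable) hlim
  obtain ⟨hEi, hEle⟩ := integrable_and_integral_le_of_tendsto (g := fun x => Real.exp (-h x))
    (c := 1) hhE (fun n x => (Real.exp_pos _).le)
    (by filter_upwards [hh] with x hx using (Real.continuous_exp.tendsto _).comp hx.neg)
    (by simp_rw [hZ1]; exact tendsto_const_nhds)
  obtain ⟨hGi, hGle⟩ := integrable_and_integral_le_of_tendsto
    (g := fun x => h x + Real.exp (-h x)) (fun n => (hhi n).add (hhE n))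
    (fun n x => by
      simp only [Pi.add_apply]
      linarith [Real.add_one_le_exp (-(V n x + Q x))])
    (by filter_upwards [hh] with x hx using hx.add ((Real.continuous_exp.tendsto _).comp hx.neg))
    hGlim
  have hi : Integrable h p := by
    refine (hGi.sub hEi).congr (ae_of_all _ fun x => ?_)
    simp
  have hexp' : (fun x => Real.exp (-(h x - Q x) - Q x)) = fun x => Real.exp (-h x) := by
    funext x; congr 1; ring
  refine ⟨V, fun x => h x - Q x, hVD, hi.sub hQi, by rw [hexp']; exact hEi, ?_, ?_⟩
  · filter_upwards [hh] with x hx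
    simpa using hx.sub_const (Q x)
  · intro V' hV'
    refine (hle V' hV').trans ?_
    rw [relF, relZ, hexp', integral_sub hi hQi]
    rw [integral_add hi hEi] at hGle
    have hZ : 0 < ∫ x, Real.exp (-h x) ∂p := integral_exp_pos hEi
    have hlog := Real.log_le_sub_one_of_pos hZ
    rw [le_div_iff₀ hZ]
    nth_rw 1 [← Real.exp_log hM]
    nth_rw 1 [← Real.exp_log hZ]
    rw [← Real.exp_add]
    exact Real.exp_le_exp.2 (by linarith)

end Abstract

section SumStructure

/-- The value of a symmetric function of `m` variables at the points of `x` indexed by `A`. -/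
def evalFinset {Λ I : Type*} (m : ℕ) (v : (Fin m → Λ) → ℝ) (x : I → Λ) (A : Finset I) : ℝ :=
  if h : A.card = m then v (fun i => x ((A.equivFinOfCardEq h).symm i)) else 0

lemma IsSymm'.eval_eq_evalFinset {Λ I : Type*} {m : ℕ} {v : (Fin m → Λ) → ℝ} (hv : IsSymm' m v)
    (x : I → Λ) (j : Fin m ↪ I) :
    v (fun i => x (j i)) = evalFinset m v x (Finset.univ.map j) := by
  have hc : (Finset.univ.map j).card = m := by simp
  rw [evalFinset, dif_pos hc]
  set e := (Finset.univ.map j).equivFinOfCardEq hc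
  have hmem : ∀ i, j i ∈ Finset.univ.map j := fun i => Finset.mem_map_of_mem j (Finset.mem_univ i)
  have hinj : Function.Injective fun i => e ⟨j i, hmem i⟩ := fun a b hab => by
    simpa using hab
  have h := hv (Equiv.ofBijective _ (Finite.injective_iff_bijective.1 hinj))
    (fun i => x (e.symm i))
  rw [← h]
  congr 1
  funext i
  simp

lemma IsSymm'.mSum_eq_sum_evalFinset {Λ I : Type*} {N m : ℕ} {v : (Fin m → Λ) → ℝ}
    (hv : IsSymm' m v) (x : I → Λ) (e : Fin N ↪ I) :
    mSum N m v (fun i => x (e i)) =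
      ∑ A ∈ (Finset.univ.map e).powersetCard m, evalFinset m v x A := by
  rw [Finset.powersetCard_map, Finset.sum_map, mSum]
  refine Finset.sum_congr rfl fun s hs => ?_
  have hc : s.card = m := (Finset.mem_powersetCard.1 hs).2
  rw [dif_pos hc]
  have h := hv.eval_eq_evalFinset x ((s.orderEmbOfFin hc).toEmbedding.trans e)
  rw [← Finset.map_map, Finset.map_orderEmbOfFin_univ] at h
  exact h

lemma mSum_add_const_mul {Λ : Type*} {N m : ℕ} (a b c : ℝ) (v w : (Fin m → Λ) → ℝ) (x : Fin N → Λ) :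
    mSum N m (fun y => a * v y + b * w y + c) x =
      a * mSum N m v x + b * mSum N m w x + N.choose m * c := by
  have h : (N.choose m : ℝ) * c =
      ∑ s ∈ Finset.powersetCard m (Finset.univ : Finset (Fin N)), c := by simp
  simp only [mSum]
  rw [h, Finset.mul_sum, Finset.mul_sum, ← Finset.sum_add_distrib, ← Finset.sum_add_distrib]
  refine Finset.sum_congr rfl fun s hs => ?_
  simp [(Finset.mem_powersetCard.1 hs).2]

lemma measurable_mSum {N m : ℕ} {v : (Fin m → Λ) → ℝ} (hv : Measurable v) :
    Measurable (mSum N m v) := by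
  refine Finset.measurable_fun_sum _ fun s hs => ?_
  simp only [(Finset.mem_powersetCard.1 hs).2, dite_true]
  exact hv.comp (measurable_pi_lambda _ fun i => measurable_pi_apply _)

instance (μ : Measure Λ) [SigmaFinite μ] (k : ℕ) : SigmaFinite (pm μ k) := by
  unfold pm; infer_instance

/-- Restricting to a subfamily of the coordinates is quasi measure preserving. -/
lemma quasiMeasurePreserving_pi_comp {I J : Type*} [Fintype I] [Fintype J] (μ : Measure Λ)
    [SigmaFinite μ] (j : J ↪ I) :
    Measure.QuasiMeasurePreserving (fun (x : I → Λ) i => x (j i))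
      (Measure.pi fun _ : I => μ) (Measure.pi fun _ : J => μ) := by
  classical
  let : Fintype {i // i ∈ Set.range j} := Subtype.fintype _
  let e : J ≃ {i // i ∈ Set.range j} := Equiv.ofInjective j j.injective
  have h₁ := measurePreserving_piEquivPiSubtypeProd (fun _ : I => μ) (· ∈ Set.range j)
  have h₂ := (measurePreserving_piCongrLeft (fun _ : {i // i ∈ Set.range j} => μ) e).symm
  have h := (h₂.quasiMeasurePreserving.comp Measure.quasiMeasurePreserving_fst).comp
    h₁.quasiMeasurePreserving
  convert h using 1
  funext x i
  rfl

/-- Membership in a linear subspace passes from the `m`-sums to the generators. -/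
lemma ae_mem_of_ae_mSum_mem {T : Type*} (μ : Measure Λ) [SigmaFinite μ] (hμ : μ ≠ 0) {N m : ℕ}
    (hmN : m ≤ N) (K : Submodule ℝ (T → ℝ)) (v : T → (Fin m → Λ) → ℝ)
    (hv : ∀ t, IsSymm' m (v t)) (h : ∀ᵐ x ∂(pm μ N), (fun t => mSum N m (v t) x) ∈ K) :
    ∀ᵐ y ∂(pm μ m), (fun t => v t y) ∈ K := by
  classical
  have hall : ∀ᵐ x ∂(Measure.pi fun _ : Fin m ⊕ Fin N => μ), ∀ e : Fin N ↪ Fin m ⊕ Fin N,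
      (fun t => mSum N m (v t) (fun i => x (e i))) ∈ K :=
    ae_all_iff.2 fun e => (quasiMeasurePreserving_pi_comp μ e).ae h
  have hinl : ∀ᵐ x ∂(Measure.pi fun _ : Fin m ⊕ Fin N => μ),
      (fun t => v t (fun i => x (Sum.inl i))) ∈ K := by
    filter_upwards [hall] with x hx
    have key := mem_of_sum_powersetCard_mem K m N (Finset.univ : Finset (Fin m ⊕ Fin N))
      (fun A t => evalFinset m (v t) x A) hmN (by simp [add_comm]) ?_
      (Finset.univ.map Function.Embedding.inl) (Finset.subset_univ _) (by simp)
    · convert key using 1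
      funext t
      exact (hv t).eval_eq_evalFinset x Function.Embedding.inl
    · intro S _ hS
      have := hx ((S.equivFinOfCardEq hS).symm.toEmbedding.trans (Function.Embedding.subtype _))
      convert this using 1
      funext t
      rw [(hv t).mSum_eq_sum_evalFinset, Finset.sum_apply]
      congr 2
      ext a
      simp only [Finset.mem_map, Finset.mem_univ, true_and, Function.Embedding.trans_apply,
        Equiv.coe_toEmbedding, Function.Embedding.subtype_apply]
      exact ⟨fun ha => ⟨S.equivFinOfCardEq hS ⟨a, ha⟩, by simp⟩,
        fun ⟨i, hi⟩ => hi ▸ ((S.equivFinOfCardEq hS).symm i).2⟩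
  have hprod := (measurePreserving_sumPiEquivProdPi_symm
    (fun _ : Fin m ⊕ Fin N => μ)).quasiMeasurePreserving.ae hinl
  have hne : NeZero (pm μ N) := ⟨by
    rw [Ne, ← Measure.measure_univ_eq_zero, pm, Measure.pi_univ]
    simp [hμ]⟩
  filter_upwards [Measure.ae_ae_of_ae_prod hprod] with y hy
  obtain ⟨z, hz⟩ := @Eventually.exists _ _ _ (ae_neBot.2 hne.out) hy
  exact hz

lemma ae_eq_const_of_mSum_ae_eq_const (μ : Measure Λ) [SigmaFinite μ] (hμ : μ ≠ 0) {N m : ℕ}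
    (hmN : m ≤ N) {u₀ u₁ : (Fin m → Λ) → ℝ} (h₀ : IsSymm' m u₀) (h₁ : IsSymm' m u₁) {C : ℝ}
    (h : ∀ᵐ x ∂(pm μ N), mSum N m u₁ x - mSum N m u₀ x = C) :
    ∀ᵐ y ∂(pm μ m), u₁ y - u₀ y = C / (N.choose m : ℝ) := by
  have hne : (N.choose m : ℝ) ≠ 0 := by exact_mod_cast (Nat.choose_pos hmN).ne'
  have := ae_mem_of_ae_mSum_mem μ hμ hmN (⊥ : Submodule ℝ (Unit → ℝ))
    (fun _ y => 1 * u₁ y + (-1) * u₀ y + -(C / (N.choose m : ℝ)))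
    (fun _ σ x => by simp only [h₀ σ x, h₁ σ x]) (by
      filter_upwards [h] with x hx
      rw [Submodule.mem_bot]
      funext _
      rw [mSum_add_const_mul, ← hx]
      simp only [Pi.zero_apply]
      field_simp
      ring)
  filter_upwards [this] with y hy
  have := congrFun ((Submodule.mem_bot ℝ).1 hy) ()
  simp only [Pi.zero_apply] at this
  linarith

/-- The space of convergent real sequences. -/
def convergentSeq : Submodule ℝ (ℕ → ℝ) where
  carrier := {s | ∃ l, Tendsto s atTop (nhds l)}
  add_mem' := fun ⟨a, ha⟩ ⟨b, hb⟩ => ⟨a + b, ha.add hb⟩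
  zero_mem' := ⟨0, tendsto_const_nhds⟩
  smul_mem' := fun c _ ⟨a, ha⟩ => ⟨c * a, ha.const_mul c⟩

/-- An a.e. limit of functions with `m`-sum structure has `m`-sum structure. -/
lemma exists_hasSumStruct_of_tendsto (μ : Measure Λ) [SigmaFinite μ] (hμ : μ ≠ 0) {N m : ℕ}
    (hmN : m ≤ N) {V : ℕ → (Fin N → Λ) → ℝ} {U : (Fin N → Λ) → ℝ}
    {v : ℕ → (Fin m → Λ) → ℝ} (hV : ∀ n, HasSumStruct μ N m (V n) (v n))
    (hU : ∀ᵐ x ∂(pm μ N), Tendsto (fun n => V n x) atTop (nhds (U x))) :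
    ∃ u, HasSumStruct μ N m U u := by
  have hVm : ∀ᵐ x ∂(pm μ N), ∀ n, V n x = mSum N m (v n) x := ae_all_iff.2 fun n => (hV n).2.2
  have hconv : ∀ᵐ y ∂(pm μ m), (fun n => v n y) ∈ convergentSeq := by
    refine ae_mem_of_ae_mSum_mem μ hμ hmN _ v (fun n => (hV n).1) ?_
    filter_upwards [hU, hVm] with x hx hxm
    exact ⟨U x, by simpa only [hxm] using hx⟩
  let u : (Fin m → Λ) → ℝ := fun y => (limsup (fun n => (v n y : EReal)) atTop).toReal
  have hu : ∀ᵐ y ∂(pm μ m), Tendsto (fun n => v n y) atTop (nhds (u y)) := by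
    filter_upwards [hconv] with y ⟨l, hl⟩
    have : u y = l := by
      have hlim : Tendsto (fun n => (v n y : EReal)) atTop (nhds l) :=
        (continuous_coe_real_ereal.tendsto l).comp hl
      simp only [u]
      rw [hlim.limsup_eq, EReal.toReal_coe]
    rwa [this]
  refine ⟨u, fun σ x => ?_, ?_, ?_⟩
  · simp only [u, (hV _).1 σ x]
  · exact measurable_ereal_toReal.comp
      (Measurable.limsup fun n => measurable_coe_real_ereal.comp (hV n).2.1)
  · have hsub : ∀ᵐ x ∂(pm μ N), ∀ e : Fin m ↪ Fin N,
        Tendsto (fun n => v n (fun i => x (e i))) atTop (nhds (u (fun i => x (e i)))) :=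
      ae_all_iff.2 fun e => (quasiMeasurePreserving_pi_comp μ e).ae hu
    filter_upwards [hU, hVm, hsub] with x hx hxm hxs
    refine tendsto_nhds_unique hx ?_
    simp only [hxm]
    refine tendsto_finsetSum _ fun s hs => ?_
    have hc : s.card = m := (Finset.mem_powersetCard.1 hs).2
    simp only [hc, dite_true]
    exact hxs (s.orderEmbOfFin hc).toEmbedding

/-- Gluing is measure preserving. -/
lemma measurePreserving_glue (μ : Measure Λ) [SigmaFinite μ] {N m : ℕ} (hmN : m ≤ N) :
    MeasurePreserving (fun q : (Fin m → Λ) × (Fin (N - m) → Λ) => glue hmN q.1 q.2)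
      ((pm μ m).prod (pm μ (N - m))) (pm μ N) := by
  let e : Fin m ⊕ Fin (N - m) ≃ Fin N := finSumFinEquiv.trans (finCongr (by omega))
  have h := (measurePreserving_piCongrLeft (fun _ : Fin N => μ) e).comp
    (measurePreserving_sumPiEquivProdPi_symm (fun _ : Fin m ⊕ Fin (N - m) => μ))
  have hfun : (fun q : (Fin m → Λ) × (Fin (N - m) → Λ) => glue hmN q.1 q.2) =
      MeasurableEquiv.piCongrLeft (fun _ : Fin N => Λ) e ∘
        (MeasurableEquiv.sumPiEquivProdPi fun _ : Fin m ⊕ Fin (N - m) => Λ).symm := by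
    funext q i
    obtain ⟨k, rfl⟩ := e.surjective i
    rw [Function.comp_apply, MeasurableEquiv.coe_piCongrLeft, Equiv.piCongrLeft_apply_apply]
    rcases k with k | k <;> simp [glue, e] <;> rfl
  rw [hfun]
  exact h

lemma isFiniteMeasure_rhomeas (μ : Measure Λ) [SigmaFinite μ] {N m : ℕ} (hmN : m ≤ N)
    {P : (Fin N → Λ) → ℝ} (hPmeas : Measurable P)
    (hPprob : ∫⁻ x, ENNReal.ofReal (P x) ∂(pm μ N) = 1) (hPpos : ∀ᵐ x ∂(pm μ N), 0 < P x) :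
    IsFiniteMeasure (rhomeas μ N m hmN P) := by
  refine isFiniteMeasure_withDensity (lt_of_le_of_lt ?_ ENNReal.one_lt_top).ne
  have hglue := measurePreserving_glue μ hmN
  calc ∫⁻ y, ENNReal.ofReal (rho μ N m hmN P y) ∂(pm μ m)
      ≤ ∫⁻ y, ∫⁻ z, ‖P (glue hmN y z)‖ₑ ∂(pm μ (N - m)) ∂(pm μ m) := by
        refine lintegral_mono fun y => le_trans ?_ (enorm_integral_le_lintegral_enorm _)
        rw [Real.enorm_eq_ofReal_abs]
        exact ENNReal.ofReal_le_ofReal (le_abs_self _)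
    _ = ∫⁻ q, ‖P (glue hmN q.1 q.2)‖ₑ ∂((pm μ m).prod (pm μ (N - m))) :=
        (lintegral_prod _ ((hPmeas.comp hglue.measurable).enorm.aemeasurable)).symm
    _ = ∫⁻ x, ‖P x‖ₑ ∂(pm μ N) := hglue.lintegral_comp hPmeas.enorm
    _ = ∫⁻ x, ENNReal.ofReal (P x) ∂(pm μ N) := by
        refine lintegral_congr_ae ?_
        filter_upwards [hPpos] with x hx
        rw [Real.enorm_eq_ofReal_abs, abs_of_pos hx]
    _ ≤ 1 := hPprob.le

end SumStructure

section Reduction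

lemma HasSumStruct.aemeasurable {μ : Measure Λ} {N m : ℕ} {V : (Fin N → Λ) → ℝ}
    {v : (Fin m → Λ) → ℝ} (h : HasSumStruct μ N m V v) : AEMeasurable V (pm μ N) :=
  ⟨_, measurable_mSum h.2.1, h.2.2⟩

lemma HasSumStruct.add_const {μ : Measure Λ} {N m : ℕ} (hmN : m ≤ N) {V : (Fin N → Λ) → ℝ}
    {v : (Fin m → Λ) → ℝ} (h : HasSumStruct μ N m V v) (c : ℝ) :
    HasSumStruct μ N m (fun x => V x + c) (fun y => v y + c / N.choose m) := by
  have hne : (N.choose m : ℝ) ≠ 0 := by exact_mod_cast (Nat.choose_pos hmN).ne'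
  refine ⟨fun σ x => by simp only [h.1 σ x], h.2.1.add_const _, ?_⟩
  filter_upwards [h.2.2] with x hx
  have := mSum_add_const_mul 1 0 (c / N.choose m) v v x
  simp only [one_mul, zero_mul, add_zero, mul_div_cancel₀ _ hne] at this
  rw [this, hx]

lemma HasSumStruct.midpoint {μ : Measure Λ} {N m : ℕ} {V V' : (Fin N → Λ) → ℝ}
    {v v' : (Fin m → Λ) → ℝ} (h : HasSumStruct μ N m V v) (h' : HasSumStruct μ N m V' v') :
    HasSumStruct μ N m (fun x => (V x + V' x) / 2) (fun y => (v y + v' y) / 2) := by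
  refine ⟨fun σ x => by simp only [h.1 σ x, h'.1 σ x], (h.2.1.add h'.2.1).div_const _, ?_⟩
  filter_upwards [h.2.2, h'.2.2] with x hx hx'
  have := mSum_add_const_mul (1 / 2) (1 / 2) 0 v v' x
  simp only [mul_zero, add_zero] at this
  rw [hx, hx', show (fun y => (v y + v' y) / 2) = fun y => 1 / 2 * v y + 1 / 2 * v' y by
    funext y; ring, this]
  ring

lemma integrable_exp_neg_midpoint {X : Type*} [MeasurableSpace X] {ν : Measure X} {V V' : X → ℝ}
    (h : Integrable (fun x => Real.exp (-V x)) ν) (h' : Integrable (fun x => Real.exp (-V' x)) ν)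
    (hm : AEMeasurable (fun x => (V x + V' x) / 2) ν) :
    Integrable (fun x => Real.exp (-((V x + V' x) / 2))) ν := by
  refine Integrable.mono' (h.add h') hm.neg.exp.aestronglyMeasurable (ae_of_all _ fun x => ?_)
  rw [Real.norm_eq_abs, abs_of_pos (Real.exp_pos _)]
  simp only [Pi.add_apply]
  rcases le_total (V x) (V' x) with hx | hx
  · have := Real.exp_le_exp.2 (show -((V x + V' x) / 2) ≤ -V x by linarith)
    linarith [Real.exp_pos (-V' x)]
  · have := Real.exp_le_exp.2 (show -((V x + V' x) / 2) ≤ -V' x by linarith)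
    linarith [Real.exp_pos (-V x)]

variable {μ : Measure Λ} {N m : ℕ} {P W : (Fin N → Λ) → ℝ}

lemma Pmeas_absolutelyContinuous : Pmeas μ N P ≪ pm μ N := withDensity_absolutelyContinuous _ _

lemma absolutelyContinuous_Pmeas (hPmeas : Measurable P) (hPpos : ∀ᵐ x ∂(pm μ N), 0 < P x) :
    pm μ N ≪ Pmeas μ N P := by
  refine withDensity_absolutelyContinuous' hPmeas.ennreal_ofReal.aemeasurable ?_
  filter_upwards [hPpos] with x hx
  exact (ENNReal.ofReal_pos.2 hx).ne'

lemma exp_neg_eq_mul_exp (V W : ℝ) {P : ℝ} (hP : 0 < P) :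
    Real.exp (-V - W) = P * Real.exp (-V - (W + Real.log P)) := by
  nth_rw 1 [← Real.exp_log hP]
  rw [← Real.exp_add]
  congr 1
  ring

lemma Wmeas_eq_withDensity_Pmeas (hPmeas : Measurable P) (hPpos : ∀ᵐ x ∂(pm μ N), 0 < P x)
    (hWmeas : Measurable W) :
    Wmeas μ N W = (Pmeas μ N P).withDensity
      fun x => ENNReal.ofReal (Real.exp (-(W x + Real.log (P x)))) := by
  have hm : Measurable fun x => ENNReal.ofReal (Real.exp (-(W x + Real.log (P x)))) :=
    (hWmeas.add hPmeas.log).neg.exp.ennreal_ofReal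
  rw [Pmeas, ← withDensity_mul _ hPmeas.ennreal_ofReal hm, Wmeas]
  refine withDensity_congr_ae ?_
  filter_upwards [hPpos] with x hx
  rw [Pi.mul_apply, ← ENNReal.ofReal_mul hx.le]
  simpa using congrArg ENNReal.ofReal (exp_neg_eq_mul_exp 0 (W x) hx)

lemma integrable_exp_Wmeas_iff (hPmeas : Measurable P) (hPpos : ∀ᵐ x ∂(pm μ N), 0 < P x)
    (hWmeas : Measurable W) (V : (Fin N → Λ) → ℝ) :
    Integrable (fun x => Real.exp (-(V x))) (Wmeas μ N W) ↔
      Integrable (fun x => Real.exp (-V x - (W x + Real.log (P x)))) (Pmeas μ N P) := by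
  have hm : Measurable fun x => ENNReal.ofReal (Real.exp (-(W x + Real.log (P x)))) :=
    (hWmeas.add hPmeas.log).neg.exp.ennreal_ofReal
  rw [Wmeas_eq_withDensity_Pmeas hPmeas hPpos hWmeas,
    integrable_withDensity_iff_integrable_smul' hm (ae_of_all _ fun _ => ENNReal.ofReal_lt_top)]
  refine integrable_congr (ae_of_all _ fun x => ?_)
  simp only
  rw [ENNReal.toReal_ofReal (Real.exp_pos _).le, smul_eq_mul, ← Real.exp_add]
  congr 1
  ring

lemma Zfun_eq_relZ (hPmeas : Measurable P) (hPpos : ∀ᵐ x ∂(pm μ N), 0 < P x)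
    (hWmeas : Measurable W) {V : (Fin N → Λ) → ℝ} (hV : AEMeasurable V (pm μ N)) :
    Zfun μ N W V = relZ (Pmeas μ N P) (fun x => W x + Real.log (P x)) V := by
  have hm : AEMeasurable (fun x => Real.exp (-V x - (W x + Real.log (P x)))) (pm μ N) :=
    (hV.neg.sub (hWmeas.add hPmeas.log).aemeasurable).exp
  rw [relZ, integral_eq_lintegral_of_nonneg_ae (ae_of_all _ fun x => (Real.exp_pos _).le)
    (hm.mono_ac Pmeas_absolutelyContinuous).aestronglyMeasurable, Pmeas,
    lintegral_withDensity_eq_lintegral_mul₀ hPmeas.ennreal_ofReal.aemeasurable hm.ennreal_ofReal,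
    Zfun, ZE]
  congr 1
  refine lintegral_congr_ae ?_
  filter_upwards [hPpos] with x hx
  rw [Pi.mul_apply, ← ENNReal.ofReal_mul hx.le, ← exp_neg_eq_mul_exp _ _ hx]

lemma FP_eq_relF (hPmeas : Measurable P) (hPpos : ∀ᵐ x ∂(pm μ N), 0 < P x)
    (hWmeas : Measurable W) {V : (Fin N → Λ) → ℝ} (hV : AEMeasurable V (pm μ N)) :
    FP μ N P W V = relF (Pmeas μ N P) (fun x => W x + Real.log (P x)) V := by
  rw [FP, relF, Zfun_eq_relZ hPmeas hPpos hWmeas hV]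

lemma isProbabilityMeasure_Pmeas (hPprob : ∫⁻ x, ENNReal.ofReal (P x) ∂(pm μ N) = 1) :
    IsProbabilityMeasure (Pmeas μ N P) :=
  ⟨by rw [Pmeas, withDensity_apply _ MeasurableSet.univ, Measure.restrict_univ, hPprob]⟩

lemma integrable_exp_add_const {ν : Measure (Fin N → Λ)} {V : (Fin N → Λ) → ℝ}
    (h : Integrable (fun x => Real.exp (-(V x))) ν) (c : ℝ) :
    Integrable (fun x => Real.exp (-(V x + c))) ν := by
  refine (h.const_mul (Real.exp (-c))).congr (ae_of_all _ fun x => ?_)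
  simp only
  rw [← Real.exp_add]
  congr 1
  ring

lemma Wmeas_absolutelyContinuous : Wmeas μ N W ≪ pm μ N := withDensity_absolutelyContinuous _ _

lemma isAdmissible_memVP (hmN : m ≤ N) (hPmeas : Measurable P)
    (hPprob : ∫⁻ x, ENNReal.ofReal (P x) ∂(pm μ N) = 1)
    (hPpos : ∀ᵐ x ∂(pm μ N), 0 < P x) (hWmeas : Measurable W) :
    IsAdmissible (Pmeas μ N P) (fun x => W x + Real.log (P x)) {V | memVP μ N m P W V} where
  integrable := fun _ hV => hV.1
  integrable_exp := fun V hV => (integrable_exp_Wmeas_iff hPmeas hPpos hWmeas V).1 hV.2.1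
  add_const := by
    have := isProbabilityMeasure_Pmeas hPprob
    rintro V ⟨h₁, h₂, v, hv⟩ c
    exact ⟨h₁.add (integrable_const c), integrable_exp_add_const h₂ c, _, hv.add_const hmN c⟩
  midpoint := by
    rintro V ⟨h₁, h₂, v, hv⟩ V' ⟨h₁', h₂', v', hv'⟩
    have hm := hv.midpoint hv'
    exact ⟨(h₁.add h₁').div_const 2, integrable_exp_neg_midpoint h₂ h₂'
      (hm.aemeasurable.mono_ac Wmeas_absolutelyContinuous), _, hm⟩

variable [SigmaFinite μ]

lemma memVrho_add_const (hmN : m ≤ N) (hPmeas : Measurable P)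
    (hPprob : ∫⁻ x, ENNReal.ofReal (P x) ∂(pm μ N) = 1)
    (hPpos : ∀ᵐ x ∂(pm μ N), 0 < P x) {V : (Fin N → Λ) → ℝ} (hV : memVrho μ N m hmN P W V)
    (c : ℝ) : memVrho μ N m hmN P W (fun x => V x + c) := by
  have := isFiniteMeasure_rhomeas μ hmN hPmeas hPprob hPpos
  obtain ⟨h, v, hv, hvi⟩ := hV
  exact ⟨integrable_exp_add_const h c, _, hv.add_const hmN c, hvi.add (integrable_const _)⟩

/-- If `FP` is bounded on the class `memVrho`, then every member of that class is integrable
with respect to `P`: otherwise `FP` would be unbounded along its translates by constants. -/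
lemma integrable_of_memVrho_of_le (hmN : m ≤ N) (hPmeas : Measurable P)
    (hPprob : ∫⁻ x, ENNReal.ofReal (P x) ∂(pm μ N) = 1)
    (hPpos : ∀ᵐ x ∂(pm μ N), 0 < P x) (hWmeas : Measurable W) {B : ℝ}
    (hB : ∀ V, memVrho μ N m hmN P W V → FP μ N P W V ≤ B) {V : (Fin N → Λ) → ℝ}
    (hV : memVrho μ N m hmN P W V) : Integrable V (Pmeas μ N P) := by
  have := isProbabilityMeasure_Pmeas hPprob
  by_contra hnot
  set Q := fun x => W x + Real.log (P x)
  have hZ : 0 < relZ (Pmeas μ N P) Q V :=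
    integral_exp_pos ((integrable_exp_Wmeas_iff hPmeas hPpos hWmeas V).1 hV.1)
  have hle : ∀ c : ℝ, Real.exp c ≤ B * relZ (Pmeas μ N P) Q V := by
    intro c
    have hVc := memVrho_add_const hmN hPmeas hPprob hPpos hV c
    have hnot' : ¬ Integrable (fun x => V x + c) (Pmeas μ N P) := fun hc => hnot <|
      (hc.sub (integrable_const c)).congr (ae_of_all _ fun x => by simp)
    obtain ⟨-, v, hv, -⟩ := id hVc
    have h := hB _ hVc
    rw [FP_eq_relF hPmeas hPpos hWmeas hv.aemeasurable, relF, integral_undef hnot', neg_zero,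
      Real.exp_zero, relZ_add_const, div_le_iff₀ (mul_pos (Real.exp_pos _) hZ)] at h
    have h' := mul_le_mul_of_nonneg_left h (Real.exp_pos c).le
    rw [mul_one, Real.exp_neg] at h'
    refine h'.trans_eq ?_
    field_simp
  have := hle (B * relZ (Pmeas μ N P) Q V)
  linarith [Real.add_one_le_exp (B * relZ (Pmeas μ N P) Q V)]

lemma isAdmissible_memVrho (hmN : m ≤ N) (hPmeas : Measurable P)
    (hPprob : ∫⁻ x, ENNReal.ofReal (P x) ∂(pm μ N) = 1)
    (hPpos : ∀ᵐ x ∂(pm μ N), 0 < P x) (hWmeas : Measurable W) {B : ℝ}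
    (hB : ∀ V, memVrho μ N m hmN P W V → FP μ N P W V ≤ B) :
    IsAdmissible (Pmeas μ N P) (fun x => W x + Real.log (P x))
      {V | memVrho μ N m hmN P W V} where
  integrable := fun _ hV => integrable_of_memVrho_of_le hmN hPmeas hPprob hPpos hWmeas hB hV
  integrable_exp := fun V hV => (integrable_exp_Wmeas_iff hPmeas hPpos hWmeas V).1 hV.1
  add_const := fun _ hV c => memVrho_add_const hmN hPmeas hPprob hPpos hV c
  midpoint := by
    rintro V ⟨h₂, v, hv, hvi⟩ V' ⟨h₂', v', hv', hvi'⟩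
    have hm := hv.midpoint hv'
    exact ⟨integrable_exp_neg_midpoint h₂ h₂'
      (hm.aemeasurable.mono_ac Wmeas_absolutelyContinuous), _, hm, (hvi.add hvi').div_const 2⟩

/-- Maximizers of `FP` on an admissible class of potentials with `m`-sum structure, and their
generators, agree up to constants. -/
lemma exists_const_of_isMax (hμ : μ ≠ 0) (hmN : m ≤ N) (hPmeas : Measurable P)
    (hPprob : ∫⁻ x, ENNReal.ofReal (P x) ∂(pm μ N) = 1)
    (hPpos : ∀ᵐ x ∂(pm μ N), 0 < P x) (hWmeas : Measurable W) {D : Set ((Fin N → Λ) → ℝ)}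
    (hD : IsAdmissible (Pmeas μ N P) (fun x => W x + Real.log (P x)) D)
    (hDm : ∀ V ∈ D, AEMeasurable V (pm μ N)) {U₀ U₁ : (Fin N → Λ) → ℝ}
    {u₀ u₁ : (Fin m → Λ) → ℝ} (hU₀ : U₀ ∈ D) (hU₁ : U₁ ∈ D)
    (hu₀ : HasSumStruct μ N m U₀ u₀) (hu₁ : HasSumStruct μ N m U₁ u₁)
    (hmax₀ : ∀ V ∈ D, FP μ N P W V ≤ FP μ N P W U₀)
    (hmax₁ : ∀ V ∈ D, FP μ N P W V ≤ FP μ N P W U₁) :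
    ∃ C : ℝ, (fun x => U₁ x - U₀ x) =ᵐ[pm μ N] (fun _ => C) ∧
      (fun y => u₁ y - u₀ y) =ᵐ[pm μ m] (fun _ => C / (N.choose m : ℝ)) := by
  have := isProbabilityMeasure_Pmeas hPprob
  have hF : ∀ V ∈ D, FP μ N P W V = relF (Pmeas μ N P) (fun x => W x + Real.log (P x)) V :=
    fun V hV => FP_eq_relF hPmeas hPpos hWmeas (hDm V hV)
  obtain ⟨C, hC⟩ := ae_sub_eq_const_of_isMax hD hU₀ hU₁
    (fun V hV => by rw [← hF V hV, ← hF _ hU₀]; exact hmax₀ V hV)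
    (fun V hV => by rw [← hF V hV, ← hF _ hU₁]; exact hmax₁ V hV)
  have hC' := (absolutelyContinuous_Pmeas hPmeas hPpos).ae_le hC
  refine ⟨C, hC', ae_eq_const_of_mSum_ae_eq_const μ hμ hmN hu₀.1 hu₁.1 ?_⟩
  filter_upwards [hC', hu₀.2.2, hu₁.2.2] with x hx h₀ h₁
  rw [← h₀, ← h₁]
  exact hx

end Reduction

/-- If `(W + log P)₊ ∈ L¹(Λ^N; P d^N x)` and `V_P ≠ ∅`, then `F_P`
attains its maximum on `V_P` at some `U` with `m`-sum structure and generator `u`.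
Moreover any two maximizers of `F_P` on `V_P` (or on `V_{ρ^{(m)}}`, if maximizers on
`V_{ρ^{(m)}}` exist) differ a.e. by a real constant `C`, and their generators differ
a.e. by `C / C(N,m)`. -/
theorem statement10 (μ : Measure Λ) [SigmaFinite μ] (hμ : μ ≠ 0)
    (N m : ℕ) (hN : 2 ≤ N) (hm : 1 ≤ m) (hmN : m ≤ N)
    (P W : (Fin N → Λ) → ℝ) (hPmeas : Measurable P)
    (hPprob : ∫⁻ x, ENNReal.ofReal (P x) ∂(pm μ N) = 1)
    (hPpos : ∀ᵐ x ∂(pm μ N), 0 < P x)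
    (hWmeas : Measurable W)
    (hWlogP : Integrable (fun x => max (W x + Real.log (P x)) 0) (Pmeas μ N P))
    (hne : ∃ V, memVP μ N m P W V) :
    (∃ U u, HasSumStruct μ N m U u ∧ memVP μ N m P W U ∧
        ∀ V, memVP μ N m P W V → FP μ N P W V ≤ FP μ N P W U) ∧
    (∀ U₀ U₁ u₀ u₁, memVP μ N m P W U₀ → memVP μ N m P W U₁ →
        HasSumStruct μ N m U₀ u₀ → HasSumStruct μ N m U₁ u₁ →
        (∀ V, memVP μ N m P W V → FP μ N P W V ≤ FP μ N P W U₀) →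
        (∀ V, memVP μ N m P W V → FP μ N P W V ≤ FP μ N P W U₁) →
        ∃ C : ℝ, (fun x => U₁ x - U₀ x) =ᵐ[pm μ N] (fun _ => C) ∧
          (fun y => u₁ y - u₀ y) =ᵐ[pm μ m] (fun _ => C / (N.choose m : ℝ))) ∧
    (∀ U₀ U₁ u₀ u₁, memVrho μ N m hmN P W U₀ → memVrho μ N m hmN P W U₁ →
        HasSumStruct μ N m U₀ u₀ → HasSumStruct μ N m U₁ u₁ →
        (∀ V, memVrho μ N m hmN P W V → FP μ N P W V ≤ FP μ N P W U₀) →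
        (∀ V, memVrho μ N m hmN P W V → FP μ N P W V ≤ FP μ N P W U₁) →
        ∃ C : ℝ, (fun x => U₁ x - U₀ x) =ᵐ[pm μ N] (fun _ => C) ∧
          (fun y => u₁ y - u₀ y) =ᵐ[pm μ m] (fun _ => C / (N.choose m : ℝ))) := by
  have hVPm : ∀ V, memVP μ N m P W V → AEMeasurable V (pm μ N) :=
    fun V ⟨_, _, _, hv⟩ => hv.aemeasurable
  have hD := isAdmissible_memVP (m := m) hmN hPmeas hPprob hPpos hWmeas
  refine ⟨?_, ?_, ?_⟩
  · have := isProbabilityMeasure_Pmeas hPprob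
    obtain ⟨V, U, hV, hUi, hUE, hlim, hmax⟩ := exists_tendsto_ae_relF_le hD hne
      (hWmeas.add hPmeas.log).aestronglyMeasurable hWlogP
    choose v hv using fun n => (hV n).2.2
    obtain ⟨u, hu⟩ := exists_hasSumStruct_of_tendsto μ hμ hmN hv
      ((absolutelyContinuous_Pmeas hPmeas hPpos).ae_le hlim)
    refine ⟨U, u, hu, ⟨hUi, (integrable_exp_Wmeas_iff hPmeas hPpos hWmeas U).2 hUE, u, hu⟩,
      fun V' hV' => ?_⟩
    rw [FP_eq_relF hPmeas hPpos hWmeas (hVPm V' hV'),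
      FP_eq_relF hPmeas hPpos hWmeas hu.aemeasurable]
    exact hmax V' hV'
  · intro U₀ U₁ u₀ u₁ hU₀ hU₁ hu₀ hu₁ hmax₀ hmax₁
    exact exists_const_of_isMax hμ hmN hPmeas hPprob hPpos hWmeas hD hVPm hU₀ hU₁ hu₀ hu₁
      hmax₀ hmax₁
  · intro U₀ U₁ u₀ u₁ hU₀ hU₁ hu₀ hu₁ hmax₀ hmax₁
    exact exists_const_of_isMax hμ hmN hPmeas hPprob hPpos hWmeas
      (isAdmissible_memVrho hmN hPmeas hPprob hPpos hWmeas hmax₀)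
      (fun V ⟨_, _, hv, _⟩ => hv.aemeasurable) hU₀ hU₁ hu₀ hu₁ hmax₀ hmax₁

end
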